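/- arXiv:0803.0917 — 2 statements merged into one kernel-verified Lean document; each statement's English description precedes it below -/
import Mathlib

section
/- If S and S' are two distinct pentads in U, then their intersection S ∩ S' has exactly one element. -/
/-!
Let `S` be a pentad. The Gram matrix of any four of its members is invertible, so they form a basis
of `U`; as the sum of all five members is orthogonal to each of them, it vanishes. It follows in the
same way that every `x` is the sum of those members of `S` that pair to `1` with `x`. The number of
these is even, so it is `2` when `x ≠ 0` and `x ∉ S`, while it is `4` when `x ∈ S`.

Now let `S'` be another pentad, choose `x ∈ S' \ S`, and write `x = s + t` with `s, t ∈ S`. Every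
common member of `S` and `S'` pairs to `1` with `x`, hence is `s` or `t`. Each `y ∈ S'` other than
`x` satisfies `⟨s, y⟩ + ⟨t, y⟩ = 1`, whereas `⟨s, x⟩ = ⟨t, x⟩ = 1`. So `s` and `t` pair to `1` with
`6 = 4 + 2` members of `S'` in total, which means that exactly one of them lies in `S'`.
-/

/-- The symplectic vector space `U = 𝔽₂⁴`. -/
abbrev Uspace : Type := Fin 4 → ZMod 2

/-- The symplectic form on `U` with `⟨eᵢ,eⱼ⟩ = ⟨fᵢ,fⱼ⟩ = 0` and `⟨eᵢ,fⱼ⟩ = δᵢⱼ`,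
where `e₁,e₂,f₁,f₂` are the standard basis vectors (coordinates `0,1,2,3`). -/
def symForm (x y : Uspace) : ZMod 2 :=
  x 0 * y 2 + x 1 * y 3 + x 2 * y 0 + x 3 * y 1

/-- A pentad is a set of 5 nonzero vectors of `U` pairing to `1` under the
symplectic form. -/
def IsPentad (S : Finset Uspace) : Prop :=
  (0 : Uspace) ∉ S ∧ S.card = 5 ∧ ∀ u ∈ S, ∀ v ∈ S, u ≠ v → symForm u v = 1

open Module

lemma zmodTwo_eq_ite (a : ZMod 2) : a = if a = 1 then 1 else 0 := by
  decide +revert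

lemma zmodTwo_add_eq_one_iff {a b : ZMod 2} : a + b = 1 ↔ (a = 1 ↔ b ≠ 1) := by
  decide +revert

section Azygetic

variable {V : Type*} [AddCommGroup V] [Module (ZMod 2) V]

/-- A set of vectors is azygetic for a bilinear form over `𝔽₂` if any two distinct members pair to
`1`. Pentads are the azygetic sets of five vectors in `U`. -/
def IsAzygetic (B : LinearMap.BilinForm (ZMod 2) V) (S : Finset V) : Prop :=
  ∀ u ∈ S, ∀ v ∈ S, u ≠ v → B u v = 1

/-- The members of `S` that are azygetic to `x`, that is, pair to `1` with it. When `S` has one more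
member than the dimension of the space, they are the terms of an expansion of `x`; see
`IsAzygetic.sum_azygeticPart`. -/
def azygeticPart (B : LinearMap.BilinForm (ZMod 2) V) (S : Finset V) (x : V) : Finset V :=
  {s ∈ S | B x s = 1}

variable {B : LinearMap.BilinForm (ZMod 2) V} {S S' : Finset V} {s t u x : V}

lemma mem_azygeticPart : s ∈ azygeticPart B S x ↔ s ∈ S ∧ B x s = 1 :=
  Finset.mem_filter

lemma sum_bilin_eq_card_azygeticPart (B : LinearMap.BilinForm (ZMod 2) V) (S : Finset V) (x : V) :
    ∑ s ∈ S, B x s = (azygeticPart B S x).card := by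
  rw [azygeticPart, Finset.natCast_card_filter]
  exact Finset.sum_congr rfl fun s _ => zmodTwo_eq_ite (B x s)

lemma sum_bilin_smul_eq_sum_azygeticPart (B : LinearMap.BilinForm (ZMod 2) V) (S : Finset V)
    (x : V) : ∑ s ∈ S, B x s • s = ∑ s ∈ azygeticPart B S x, s := by
  rw [azygeticPart, Finset.sum_filter]
  refine Finset.sum_congr rfl fun s _ => ?_
  conv_lhs => rw [zmodTwo_eq_ite (B x s), ite_smul, one_smul, zero_smul]

namespace IsAzygetic

lemma mono (hS : IsAzygetic B S) (hsub : S' ⊆ S) : IsAzygetic B S' :=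
  fun u hu v hv => hS u (hsub hu) v (hsub hv)

lemma azygeticPart_of_mem [DecidableEq V] (hB : B.IsAlt) (hS : IsAzygetic B S) (hx : x ∈ S) :
    azygeticPart B S x = S.erase x := by
  ext s
  rw [mem_azygeticPart, Finset.mem_erase, and_comm]
  refine and_congr_left fun hs => ⟨?_, fun hne => hS x hx s hs hne.symm⟩
  rintro h rfl
  exact zero_ne_one ((hB.self_eq_zero s).symm.trans h)

lemma inter_eq_azygeticPart_inter [DecidableEq V] (hS' : IsAzygetic B S') (hx : x ∈ S')
    (hxS : x ∉ S) : S ∩ S' = azygeticPart B S x ∩ S' := by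
  ext s
  simp only [Finset.mem_inter, mem_azygeticPart]
  refine and_congr_left fun hs' => ⟨fun hs => ⟨hs, ?_⟩, And.left⟩
  exact hS' x hx s hs' (ne_of_mem_of_not_mem hs hxS).symm

lemma ne_zero_of_mem (hS : IsAzygetic B S) (hcard : 1 < S.card) (hx : x ∈ S) : x ≠ 0 := by
  rintro rfl
  obtain ⟨s, hs, hne⟩ := Finset.exists_mem_ne hcard 0
  simpa using hS 0 hx s hs hne.symm

lemma card_azygeticPart_add_card_azygeticPart (hB : B.IsAlt) (hS : IsAzygetic B S)
    (hst : B s t = 1) (hmem : s + t ∈ S) :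
    (azygeticPart B S s).card + (azygeticPart B S t).card = S.card + 1 := by
  classical
  have hts : B t s = 1 := by rw [← hB.neg_eq, hst, CharTwo.neg_eq]
  have hexactly_one : ∀ y ∈ S, y ≠ s + t → (B s y = 1 ↔ B t y ≠ 1) := fun y hy hne => by
    rw [← zmodTwo_add_eq_one_iff, ← LinearMap.add_apply, ← map_add]
    exact hS _ hmem y hy hne.symm
  have hboth : B s (s + t) = 1 ∧ B t (s + t) = 1 := by
    simp only [map_add, hB.self_eq_zero, hst, hts, zero_add, add_zero, and_self]
  have hunion : azygeticPart B S s ∪ azygeticPart B S t = S := by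
    ext y
    have hy := hexactly_one y
    simp only [Finset.mem_union, mem_azygeticPart]
    grind
  have hinter : azygeticPart B S s ∩ azygeticPart B S t = {s + t} := by
    ext y
    have hy := hexactly_one y
    simp only [Finset.mem_inter, mem_azygeticPart, Finset.mem_singleton]
    grind
  rw [← Finset.card_union_add_card_inter, hunion, hinter, Finset.card_singleton]

lemma apply_sum_smul (hB : B.IsAlt) (hS : IsAzygetic B S) (c : V → ZMod 2) (hu : u ∈ S) :
    B (∑ s ∈ S, c s • s) u = ∑ s ∈ S, c s + c u := by
  classical
  have hother : ∀ s ∈ S.erase u, B (c s • s) u = c s := fun s hs => by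
    obtain ⟨hne, hs⟩ := Finset.mem_erase.mp hs
    simp [hS s hs u hu hne]
  rw [map_sum, LinearMap.sum_apply, ← Finset.add_sum_erase S _ hu, ← Finset.add_sum_erase S c hu,
    Finset.sum_congr rfl hother]
  simp only [map_smul, LinearMap.smul_apply, hB.self_eq_zero, smul_zero, zero_add]
  rw [add_comm (c u), CharTwo.add_cancel_right]

lemma coeff_eq_zero (hB : B.IsAlt) (hS : IsAzygetic B S) (heven : Even S.card) {c : V → ZMod 2}
    (hc : ∀ u ∈ S, B (∑ s ∈ S, c s • s) u = 0) (hu : u ∈ S) : c u = 0 := by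
  have hconst : ∀ v ∈ S, c v = ∑ s ∈ S, c s := fun v hv => by
    rw [eq_comm, ← CharTwo.add_eq_zero, ← hS.apply_sum_smul hB c hv, hc v hv]
  rw [hconst u hu, Finset.sum_congr rfl hconst, Finset.sum_const, nsmul_eq_mul,
    ZMod.natCast_eq_zero_iff_even.mpr heven, zero_mul]

lemma linearIndepOn (hB : B.IsAlt) (hS : IsAzygetic B S) (heven : Even S.card) :
    LinearIndepOn (ZMod 2) id (S : Set V) := by
  refine linearIndepOn_finset_iff.mpr fun c hc u hu => hS.coeff_eq_zero hB heven (fun v _ => ?_) hu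
  simp only [id_eq] at hc
  rw [hc, map_zero, LinearMap.zero_apply]

section FiniteDimensional

variable [FiniteDimensional (ZMod 2) V]

lemma span_eq_top (hB : B.IsAlt) (hS : IsAzygetic B S) (heven : Even S.card)
    (hcard : S.card = finrank (ZMod 2) V) : Submodule.span (ZMod 2) (S : Set V) = ⊤ :=
  Submodule.eq_top_of_finrank_eq <|
    (finrank_span_finset_eq_card (hS.linearIndepOn hB heven)).trans hcard

lemma odd_card (hB : B.IsAlt) (hS : IsAzygetic B S) (hcard : S.card = finrank (ZMod 2) V + 1) :
    Odd S.card := by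
  rw [← Nat.not_even_iff_odd]
  intro heven
  have hle := Submodule.finrank_le (Submodule.span (ZMod 2) (S : Set V))
  rw [finrank_span_finset_eq_card (hS.linearIndepOn hB heven), hcard] at hle
  exact Nat.not_succ_le_self _ hle

lemma eq_zero_of_forall_apply_eq_zero (hB : B.IsAlt) (hS : IsAzygetic B S)
    (hcard : S.card = finrank (ZMod 2) V + 1) (hx : ∀ u ∈ S, B x u = 0) : x = 0 := by
  classical
  have hodd := hS.odd_card hB hcard
  obtain ⟨s, hs⟩ := Finset.card_pos.mp hodd.pos
  have hT : IsAzygetic B (S.erase s) := hS.mono (Finset.erase_subset s S)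
  have hTcard : (S.erase s).card = finrank (ZMod 2) V := by
    rw [Finset.card_erase_of_mem hs, hcard, Nat.add_sub_cancel]
  have hTeven : Even (S.erase s).card := by
    rw [Finset.card_erase_of_mem hs]
    exact hodd.tsub_odd odd_one
  have hxT : x ∈ Submodule.span (ZMod 2) (S.erase s : Set V) := by
    rw [hT.span_eq_top hB hTeven hTcard]
    exact Submodule.mem_top
  obtain ⟨c, -, rfl⟩ := Submodule.mem_span_finset.mp hxT
  refine Finset.sum_eq_zero fun u hu => ?_
  rw [hT.coeff_eq_zero hB hTeven (fun v hv => hx v (Finset.mem_of_mem_erase hv)) hu, zero_smul]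

lemma sum_eq_zero (hB : B.IsAlt) (hS : IsAzygetic B S)
    (hcard : S.card = finrank (ZMod 2) V + 1) : ∑ s ∈ S, s = 0 := by
  refine hS.eq_zero_of_forall_apply_eq_zero hB hcard fun u hu => ?_
  have h := hS.apply_sum_smul hB 1 hu
  simp only [Pi.one_apply, one_smul, Finset.sum_const, nsmul_one,
    ZMod.natCast_eq_one_iff_odd.mpr (hS.odd_card hB hcard), CharTwo.add_self_eq_zero] at h
  exact h

lemma even_card_azygeticPart (hB : B.IsAlt) (hS : IsAzygetic B S)
    (hcard : S.card = finrank (ZMod 2) V + 1) (x : V) : Even (azygeticPart B S x).card := by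
  rw [← ZMod.natCast_eq_zero_iff_even, ← sum_bilin_eq_card_azygeticPart, ← map_sum,
    hS.sum_eq_zero hB hcard, map_zero]

lemma sum_azygeticPart (hB : B.IsAlt) (hS : IsAzygetic B S)
    (hcard : S.card = finrank (ZMod 2) V + 1) (x : V) : ∑ s ∈ azygeticPart B S x, s = x := by
  rw [← sum_bilin_smul_eq_sum_azygeticPart, ← sub_eq_zero]
  refine hS.eq_zero_of_forall_apply_eq_zero hB hcard fun u hu => ?_
  rw [map_sub, LinearMap.sub_apply, hS.apply_sum_smul hB _ hu, ← map_sum,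
    hS.sum_eq_zero hB hcard, map_zero, zero_add, sub_self]

lemma mem_of_card_azygeticPart_add_one (hB : B.IsAlt) (hS : IsAzygetic B S)
    (hcard : S.card = finrank (ZMod 2) V + 1) (hx : (azygeticPart B S x).card + 1 = S.card) :
    x ∈ S := by
  classical
  have hsub : azygeticPart B S x ⊆ S := Finset.filter_subset _ S
  obtain ⟨s, hs⟩ : ∃ s, S \ azygeticPart B S x = {s} := by
    rw [← Finset.card_eq_one, Finset.card_sdiff_of_subset hsub, ← hx, Nat.add_sub_cancel_left]
  have hsum : s + x = 0 := by
    rw [← hS.sum_eq_zero hB hcard, ← Finset.sum_sdiff hsub, hs, Finset.sum_singleton,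
      hS.sum_azygeticPart hB hcard]
  have hxs : x = s := by
    rw [eq_neg_of_add_eq_zero_right hsum, ZModModule.neg_eq_self]
  rw [hxs]
  exact (Finset.mem_sdiff.mp (hs ▸ Finset.mem_singleton_self s)).1

end FiniteDimensional

lemma card_azygeticPart_of_notMem (hB : B.IsAlt) (hS : IsAzygetic B S) (hcard : S.card = 5)
    (hdim : finrank (ZMod 2) V = 4) (hx : x ≠ 0) (hxS : x ∉ S) : (azygeticPart B S x).card = 2 := by
  have : FiniteDimensional (ZMod 2) V := Module.finite_of_finrank_pos (hdim ▸ four_pos)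
  have hcard' : S.card = finrank (ZMod 2) V + 1 := by rw [hcard, hdim]
  have heven := hS.even_card_azygeticPart hB hcard' x
  have hle : (azygeticPart B S x).card ≤ S.card := Finset.card_filter_le S _
  have hne_zero : (azygeticPart B S x).card ≠ 0 := fun h => hx <| by
    rw [← hS.sum_azygeticPart hB hcard' x, Finset.card_eq_zero.mp h, Finset.sum_empty]
  have hne_four : (azygeticPart B S x).card + 1 ≠ S.card :=
    mt (hS.mem_of_card_azygeticPart_add_one hB hcard') hxS
  grind

lemma card_azygeticPart [DecidableEq V] (hB : B.IsAlt) (hS : IsAzygetic B S) (hcard : S.card = 5)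
    (hdim : finrank (ZMod 2) V = 4) (hx : x ≠ 0) :
    (azygeticPart B S x).card = if x ∈ S then 4 else 2 := by
  split_ifs with hxS
  · rw [hS.azygeticPart_of_mem hB hxS, Finset.card_erase_of_mem hxS, hcard]
  · exact hS.card_azygeticPart_of_notMem hB hcard hdim hx hxS

end IsAzygetic

theorem pentads_inter_card_general [DecidableEq V] (hdim : finrank (ZMod 2) V = 4) (hB : B.IsAlt)
    (hS : IsAzygetic B S) (hS' : IsAzygetic B S') (hcard : S.card = 5) (hcard' : S'.card = 5)
    (hne : S ≠ S') : (S ∩ S').card = 1 := by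
  have : FiniteDimensional (ZMod 2) V := Module.finite_of_finrank_pos (hdim ▸ four_pos)
  obtain ⟨x, hxS', hxS⟩ : ∃ x ∈ S', x ∉ S := Finset.not_subset.mp fun h =>
    hne (Finset.eq_of_subset_of_card_le h (hcard.trans hcard'.symm).le).symm
  have hx : x ≠ 0 := hS'.ne_zero_of_mem (by omega) hxS'
  obtain ⟨s, t, hst, hpart⟩ := Finset.card_eq_two.mp
    (hS.card_azygeticPart_of_notMem hB hcard hdim hx hxS)
  obtain ⟨hs, ht⟩ : s ∈ S ∧ t ∈ S := by
    rw [← Finset.singleton_subset_iff (a := t), ← Finset.insert_subset_iff, ← hpart]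
    exact Finset.filter_subset _ S
  have hsum : s + t = x := by
    rw [← hS.sum_azygeticPart hB (by omega) x, hpart, Finset.sum_pair hst]
  have hcount := hS'.card_azygeticPart_add_card_azygeticPart hB (hS s hs t ht hst)
    (hsum ▸ hxS')
  rw [hS'.card_azygeticPart hB hcard' hdim (hS.ne_zero_of_mem (by omega) hs),
    hS'.card_azygeticPart hB hcard' hdim (hS.ne_zero_of_mem (by omega) ht), hcard'] at hcount
  rw [hS'.inter_eq_azygeticPart_inter hxS' hxS, hpart]
  by_cases hs' : s ∈ S' <;> by_cases ht' : t ∈ S' <;> simp_all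

end Azygetic

/-- `symForm` as a bilinear form, so that the theory of azygetic sets applies to it. -/
def symBilinForm : LinearMap.BilinForm (ZMod 2) Uspace :=
  LinearMap.mk₂ (ZMod 2) symForm
    (fun x x' y => by simp only [symForm, Pi.add_apply]; ring)
    (fun a x y => by simp only [symForm, Pi.smul_apply, smul_eq_mul]; ring)
    (fun x y y' => by simp only [symForm, Pi.add_apply]; ring)
    (fun a x y => by simp only [symForm, Pi.smul_apply, smul_eq_mul]; ring)

lemma isAlt_symBilinForm : symBilinForm.IsAlt := fun x => by
  change x 0 * x 2 + x 1 * x 3 + x 2 * x 0 + x 3 * x 1 = 0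
  linear_combination (x 0 * x 2 + x 1 * x 3) * CharTwo.two_eq_zero (R := ZMod 2)

/-- Two distinct pentads intersect in exactly one element. -/
theorem pentads_inter_card (S S' : Finset Uspace)
    (hS : IsPentad S) (hS' : IsPentad S') (hne : S ≠ S') :
    (S ∩ S').card = 1 :=
  pentads_inter_card_general (Module.finrank_fin_fun (ZMod 2)) isAlt_symBilinForm
    hS.2.2 hS'.2.2 hS.2.1 hS'.2.1 hne
end

section
/- The symplectic group Sp(4,𝔽₂), realized in Mathlib as Matrix.symplecticGroup (Fin 2) (ZMod 2), is isomorphic as a group to the symmetric group on six letters, Equiv.Perm (Fin 6). -/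
/-!
Let `B` be a nondegenerate bilinear form on a finite `𝔽₂`-space `V` with `g²` elements, and consider
the quadratic forms `Q` polarizing to `B`. They form a torsor under `V`, where `a` takes `Q` to
`Q + B(a, ·)²`, and the sum `∑ₓ (-1) ^ Q x` is `± g`; call `Q` odd if it is `-g`. The identity
`Q x + B(a, x) = Q (x + a) + Q a` shows that translation by `a` multiplies this sum by
`(-1) ^ Q a`. Summing over the torsor gives `(g² - g) / 2` odd forms, `(g² - 2g) / 4` of which
vanish at any given `a ≠ 0`.

For `Sp(4,𝔽₂)` we have `g = 4`, so the group acts on six odd forms. The transvection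
`x ↦ x + B(x, a) a` fixes the forms with `Q a = 1` and translates by `a` those with `Q a = 0`. Only
two odd forms vanish at `a`, so the transvection acts as a transposition, and any two odd forms are
swapped by such a transvection. Hence the action is onto the symmetric group. It is faithful, since
an element fixing the odd forms `Q` and `Q + B(a, ·)²` preserves `B(a, ·)`.
-/

open Matrix Module
open LinearMap (BilinForm)

/-- A quadratic form whose polarization is the given bilinear form. In characteristic two there may
be many of these, and they are not determined by `B`. -/
structure QuadraticRefinement {R V : Type*} [CommRing R] [AddCommGroup V] [Module R V]
    (B : BilinForm R V) extends QuadraticMap R V R where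
  map_add' : ∀ x y, toQuadraticMap (x + y) = toQuadraticMap x + toQuadraticMap y + B x y

namespace QuadraticRefinement

section CommRing

variable {R V : Type*} [CommRing R] [AddCommGroup V] [Module R V] {B : BilinForm R V}

instance : FunLike (QuadraticRefinement B) V R where
  coe Q := Q.toQuadraticMap
  coe_injective := by
    rintro ⟨Q, _⟩ ⟨Q', _⟩ h
    simpa using h

protected theorem map_zero (Q : QuadraticRefinement B) : Q 0 = 0 :=
  QuadraticMap.map_zero Q.toQuadraticMap

protected theorem map_add (Q : QuadraticRefinement B) (x y : V) : Q (x + y) = Q x + Q y + B x y :=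
  Q.map_add' x y

protected theorem map_smul (Q : QuadraticRefinement B) (c : R) (x : V) :
    Q (c • x) = c ^ 2 * Q x := by
  rw [pow_two]
  exact QuadraticMap.map_smul Q.toQuadraticMap c x

theorem map_add_smul_self (Q : QuadraticRefinement B) (a x : V) :
    Q (x + B x a • a) = Q x + (1 + Q a) * B x a ^ 2 := by
  rw [Q.map_add, Q.map_smul, LinearMap.map_smul, smul_eq_mul]
  ring

variable [CharP R 2]

theorem apply_self (Q : QuadraticRefinement B) (x : V) : B x x = 0 := by
  have hxx : x + x = 0 := by rw [← two_smul R, CharTwo.two_eq_zero, zero_smul]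
  simpa only [hxx, CharTwo.add_self_eq_zero, Q.map_zero, zero_add, eq_comm] using Q.map_add x x

/-- The translate of a refinement `Q` by `a` is `Q + B(a, ·)²`. -/
instance : AddAction V (QuadraticRefinement B) where
  vadd a Q :=
    { toQuadraticMap := Q.toQuadraticMap + QuadraticMap.sq.comp (B a)
      map_add' := fun x y => by
        change Q (x + y) + B a (x + y) * B a (x + y) =
          Q x + B a x * B a x + (Q y + B a y * B a y) + B x y
        rw [Q.map_add, map_add, CharTwo.add_mul_self]
        ring }
  zero_vadd Q := DFunLike.ext _ _ fun x => by
    change Q x + B 0 x * B 0 x = Q x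
    simp
  add_vadd a b Q := DFunLike.ext _ _ fun x => by
    change Q x + B (a + b) x * B (a + b) x = Q x + B b x * B b x + B a x * B a x
    rw [map_add, LinearMap.add_apply, CharTwo.add_mul_self]
    ring

theorem vadd_apply (a : V) (Q : QuadraticRefinement B) (x : V) :
    (a +ᵥ Q) x = Q x + B a x ^ 2 := by
  rw [pow_two]
  rfl

end CommRing

section ZModTwo

variable {V : Type*} [AddCommGroup V] [Module (ZMod 2) V] {B : BilinForm (ZMod 2) V}

theorem vadd_apply_eq_map_add (a : V) (Q : QuadraticRefinement B) (x : V) :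
    (a +ᵥ Q) x = Q (x + a) + Q a := by
  rw [vadd_apply, ZMod.pow_card, add_comm x, Q.map_add]
  linear_combination -CharTwo.add_self_eq_zero (Q a)

theorem vadd_vadd_self (a : V) (Q : QuadraticRefinement B) : a +ᵥ a +ᵥ Q = Q := by
  rw [← add_vadd, ZModModule.add_self, zero_vadd]

theorem bijective_vadd [Finite V] (hB : B.Nondegenerate) (Q : QuadraticRefinement B) :
    Function.Bijective fun a : V => a +ᵥ Q := by
  constructor
  · intro a b hab
    refine (B.toDual hB).injective (LinearMap.ext fun x => ?_)
    have hx : (a +ᵥ Q) x = (b +ᵥ Q) x := DFunLike.congr_fun hab x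
    rwa [vadd_apply, vadd_apply, ZMod.pow_card, ZMod.pow_card, add_right_inj] at hx
  · intro Q'
    -- Both forms have the same polarization, so their difference is linear.
    let f : Dual (ZMod 2) V := (AddMonoidHom.mk' (fun x => Q' x - Q x) fun x y => by
      rw [Q.map_add, Q'.map_add]
      ring).toZModLinearMap 2
    refine ⟨(B.toDual hB).symm f, DFunLike.ext _ _ fun x => ?_⟩
    rw [vadd_apply, ZMod.pow_card, BilinForm.apply_toDual_symm_apply]
    exact add_sub_cancel _ _

end ZModTwo

end QuadraticRefinement

/-- The additive character `(-1) ^ ·` of `𝔽₂`. -/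
def signChar : AddChar (ZMod 2) ℤ :=
  AddChar.zmodChar 2 (ζ := -1) (by norm_num)

theorem signChar_eq_ite (a : ZMod 2) : signChar a = if a = 0 then 1 else -1 := by
  decide +revert

theorem sum_signChar_apply {V : Type*} [AddCommGroup V] [Module (ZMod 2) V] [Fintype V]
    [DecidableEq V] {B : BilinForm (ZMod 2) V} (hB : B.Nondegenerate) (x : V) :
    ∑ a, signChar (B a x) = if x = 0 then (Fintype.card V : ℤ) else 0 := by
  split_ifs with hx
  · simp [hx]
  · let ψ : AddChar V ℤ := signChar.compAddMonoidHom (B.flip x).toAddMonoidHom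
    change ∑ a, ψ a = 0
    refine AddChar.sum_eq_zero_iff_ne_zero.2 fun hψ => hx (hB.2 x fun a => ?_)
    have ha : signChar (B a x) = 1 := DFunLike.congr_fun hψ a
    by_contra hne
    simp [signChar_eq_ite, hne] at ha

theorem pos_of_card_eq_sq {α : Type*} [Fintype α] [Nonempty α] {g : ℕ}
    (hg : Fintype.card α = g ^ 2) : 0 < g :=
  pow_pos_iff two_ne_zero |>.1 (hg ▸ Fintype.card_pos)

theorem two_mul_ite_eq_zero (a : ZMod 2) : 2 * (if a = 0 then 1 else 0) = 1 + signChar a := by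
  rw [signChar_eq_ite]
  split_ifs <;> rfl

namespace QuadraticRefinement

section Arf

variable {V : Type*} [AddCommGroup V] [Module (ZMod 2) V] {B : BilinForm (ZMod 2) V}

noncomputable instance [Finite V] : Fintype (QuadraticRefinement B) :=
  have := DFunLike.finite (QuadraticRefinement B)
  Fintype.ofFinite _

theorem sum_eq_sum_vadd [Fintype V] (hB : B.Nondegenerate) (Q : QuadraticRefinement B)
    (f : QuadraticRefinement B → ℤ) : ∑ Q', f Q' = ∑ a : V, f (a +ᵥ Q) :=
  ((bijective_vadd hB Q).sum_comp f).symm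

theorem sum_signChar_eq_zero [Finite V] (hB : B.Nondegenerate) {x : V} (hx : x ≠ 0) :
    ∑ Q : QuadraticRefinement B, signChar (Q x) = 0 := by
  classical
  have := Fintype.ofFinite V
  cases isEmpty_or_nonempty (QuadraticRefinement B)
  · exact Fintype.sum_empty _
  rw [sum_eq_sum_vadd hB (Classical.arbitrary _)]
  simp only [vadd_apply, ZMod.pow_card, AddChar.map_add_eq_mul, ← Finset.mul_sum,
    sum_signChar_apply hB, if_neg hx, mul_zero]

variable [Fintype V]

/-- The number of zeros of `Q` minus the number of its ones. Its sign is the Arf invariant. -/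
def signSum (Q : QuadraticRefinement B) : ℤ :=
  ∑ x, signChar (Q x)

/-- A refinement is odd if it takes the value one more often than zero, that is, if its Arf
invariant is one. -/
def IsOdd (Q : QuadraticRefinement B) : Prop :=
  Q.signSum < 0

theorem signSum_vadd (a : V) (Q : QuadraticRefinement B) :
    (a +ᵥ Q).signSum = signChar (Q a) * Q.signSum := by
  simp only [signSum, vadd_apply_eq_map_add, AddChar.map_add_eq_mul]
  rw [← Finset.sum_mul, mul_comm]
  exact congrArg _ (Equiv.sum_comp (Equiv.addRight a) fun x => signChar (Q x))

theorem sum_signSum_vadd (hB : B.Nondegenerate) (Q : QuadraticRefinement B) :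
    ∑ a : V, (a +ᵥ Q).signSum = Fintype.card V := by
  classical
  simp only [signSum, vadd_apply, ZMod.pow_card, AddChar.map_add_eq_mul]
  rw [Finset.sum_comm]
  simp only [← Finset.mul_sum, sum_signChar_apply hB, mul_ite, mul_zero, Finset.sum_ite_eq',
    Finset.mem_univ, if_true, Q.map_zero, AddChar.map_zero_eq_one, one_mul]

theorem signSum_mul_self (hB : B.Nondegenerate) (Q : QuadraticRefinement B) :
    Q.signSum * Q.signSum = Fintype.card V := by
  rw [← sum_signSum_vadd hB Q]
  simp only [signSum_vadd, ← Finset.sum_mul]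
  rfl

theorem card_eq (hB : B.Nondegenerate) [Nonempty (QuadraticRefinement B)] :
    Fintype.card (QuadraticRefinement B) = Fintype.card V :=
  (Fintype.card_of_bijective (bijective_vadd hB (Classical.arbitrary _))).symm

theorem sum_signSum (hB : B.Nondegenerate) [Nonempty (QuadraticRefinement B)] :
    ∑ Q : QuadraticRefinement B, Q.signSum = Fintype.card V := by
  rw [sum_eq_sum_vadd hB (Classical.arbitrary _), sum_signSum_vadd hB]

theorem sum_sub_signSum (hB : B.Nondegenerate) [Nonempty (QuadraticRefinement B)] {g : ℕ}
    (hg : Fintype.card V = g ^ 2) :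
    ∑ Q : QuadraticRefinement B, (g - Q.signSum) = g * g ^ 2 - g ^ 2 := by
  rw [Finset.sum_sub_distrib, sum_signSum hB, Finset.sum_const, Finset.card_univ, card_eq hB, hg,
    nsmul_eq_mul, mul_comm, Nat.cast_pow]

theorem sum_signChar_mul_signSum (hB : B.Nondegenerate) [Nonempty (QuadraticRefinement B)] (x : V) :
    ∑ Q : QuadraticRefinement B, signChar (Q x) * Q.signSum = Fintype.card V := by
  simp only [← signSum_vadd]
  rw [← sum_signSum hB]
  exact Equiv.sum_comp (AddAction.toPerm x) fun Q : QuadraticRefinement B => Q.signSum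

theorem signSum_eq_or_eq_neg (hB : B.Nondegenerate) {g : ℕ} (hg : Fintype.card V = g ^ 2)
    (Q : QuadraticRefinement B) : Q.signSum = g ∨ Q.signSum = -g := by
  rw [← sq_eq_sq_iff_eq_or_eq_neg, pow_two, signSum_mul_self hB, hg, Nat.cast_pow]

open Classical in
theorem two_mul_mul_ite_isOdd (hB : B.Nondegenerate) {g : ℕ} (hg : Fintype.card V = g ^ 2)
    (Q : QuadraticRefinement B) : 2 * g * (if Q.IsOdd then 1 else 0) = g - Q.signSum := by
  have hg0 : 0 < g := pos_of_card_eq_sq hg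
  rcases Q.signSum_eq_or_eq_neg hB hg with h | h
  · rw [if_neg (by rw [IsOdd, h]; omega), h]
    ring
  · rw [if_pos (by rw [IsOdd, h]; omega), h]
    ring

theorem two_mul_card_isOdd_add (hB : B.Nondegenerate) [Nonempty (QuadraticRefinement B)] {g : ℕ}
    (hg : Fintype.card V = g ^ 2) :
    2 * Nat.card {Q : QuadraticRefinement B // Q.IsOdd} + g = g ^ 2 := by
  classical
  have hsum : (2 * g * Nat.card {Q : QuadraticRefinement B // Q.IsOdd} : ℤ) = g * g ^ 2 - g ^ 2 :=
    calc
      _ = ∑ Q : QuadraticRefinement B, 2 * g * (if Q.IsOdd then 1 else 0 : ℤ) := by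
        rw [← Finset.mul_sum, Finset.sum_boole, Nat.card_eq_fintype_card, Fintype.card_subtype]
      _ = ∑ Q : QuadraticRefinement B, (g - Q.signSum) :=
        Finset.sum_congr rfl fun Q _ => Q.two_mul_mul_ite_isOdd hB hg
      _ = g * g ^ 2 - g ^ 2 := sum_sub_signSum hB hg
  have hg0 : (g : ℤ) ≠ 0 := by exact_mod_cast (pos_of_card_eq_sq hg).ne'
  zify
  refine mul_left_cancel₀ hg0 ?_
  linear_combination hsum

theorem four_mul_card_isOdd_apply_eq_zero_add (hB : B.Nondegenerate)
    [Nonempty (QuadraticRefinement B)] {g : ℕ} (hg : Fintype.card V = g ^ 2) {x : V} (hx : x ≠ 0) :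
    4 * Nat.card {Q : QuadraticRefinement B // Q.IsOdd ∧ Q x = 0} + 2 * g = g ^ 2 := by
  classical
  have hsum : (4 * g * Nat.card {Q : QuadraticRefinement B // Q.IsOdd ∧ Q x = 0} : ℤ) =
      g * g ^ 2 - g ^ 2 - g ^ 2 :=
    calc
      _ = ∑ Q : QuadraticRefinement B,
          2 * g * (if Q.IsOdd then 1 else 0) * (2 * (if Q x = 0 then 1 else 0) : ℤ) := by
        rw [Nat.card_eq_fintype_card, Fintype.card_subtype, ← Finset.sum_boole, Finset.mul_sum]
        refine Finset.sum_congr rfl fun Q _ => ?_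
        rw [ite_and]
        split_ifs <;> ring
      _ = ∑ Q : QuadraticRefinement B, (g - Q.signSum) * (1 + signChar (Q x)) :=
        Finset.sum_congr rfl fun Q _ => by
          rw [Q.two_mul_mul_ite_isOdd hB hg, two_mul_ite_eq_zero]
      _ = ∑ Q : QuadraticRefinement B, (g - Q.signSum) + g * ∑ Q : QuadraticRefinement B,
          signChar (Q x) - ∑ Q : QuadraticRefinement B, signChar (Q x) * Q.signSum := by
        rw [Finset.mul_sum, ← Finset.sum_add_distrib, ← Finset.sum_sub_distrib]
        exact Finset.sum_congr rfl fun Q _ => by ring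
      _ = g * g ^ 2 - g ^ 2 - g ^ 2 := by
        rw [sum_sub_signSum hB hg, sum_signChar_eq_zero hB hx, sum_signChar_mul_signSum hB, hg,
          mul_zero, add_zero, Nat.cast_pow]
  have hg0 : (g : ℤ) ≠ 0 := by exact_mod_cast (pos_of_card_eq_sq hg).ne'
  zify
  refine mul_left_cancel₀ hg0 ?_
  linear_combination hsum

theorem IsOdd.exists_vadd_eq {Q Q' : QuadraticRefinement B} (hB : B.Nondegenerate) (hQ : Q.IsOdd)
    (hQ' : Q'.IsOdd) : ∃ a, Q a = 0 ∧ a +ᵥ Q = Q' := by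
  obtain ⟨a, rfl : a +ᵥ Q = Q'⟩ := (bijective_vadd hB Q).2 Q'
  refine ⟨a, by_contra fun ha => ?_, rfl⟩
  rw [IsOdd] at hQ
  rw [IsOdd, signSum_vadd, signChar_eq_ite, if_neg ha] at hQ'
  linarith

theorem IsOdd.vadd {Q : QuadraticRefinement B} (hQ : Q.IsOdd) {a : V} (ha : Q a = 0) :
    (a +ᵥ Q).IsOdd := by
  rwa [IsOdd, signSum_vadd, ha, AddChar.map_zero_eq_one, one_mul]

theorem exists_isOdd_apply_eq_zero (hB : B.Nondegenerate) [Nonempty (QuadraticRefinement B)] {g : ℕ}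
    (hg : Fintype.card V = g ^ 2) (hg2 : 2 < g) {x : V} (hx : x ≠ 0) :
    ∃ Q : QuadraticRefinement B, Q.IsOdd ∧ Q x = 0 := by
  have hcard := four_mul_card_isOdd_apply_eq_zero_add hB hg hx
  have hpos : 0 < Nat.card {Q : QuadraticRefinement B // Q.IsOdd ∧ Q x = 0} := by nlinarith
  obtain ⟨⟨Q, hQ⟩⟩ := (Nat.card_pos_iff.1 hpos).1
  exact ⟨Q, hQ⟩

theorem IsOdd.eq_or_eq_of_apply_eq_zero (hB : B.Nondegenerate) (hV : Fintype.card V = 4 ^ 2) {x : V}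
    (hx : x ≠ 0) {Q Q' S : QuadraticRefinement B} (hQ : Q.IsOdd) (hQ' : Q'.IsOdd) (hS : S.IsOdd)
    (hQx : Q x = 0) (hQ'x : Q' x = 0) (hSx : S x = 0) (hne : Q ≠ Q') : S = Q ∨ S = Q' := by
  have : Nonempty (QuadraticRefinement B) := ⟨Q⟩
  have hcard := four_mul_card_isOdd_apply_eq_zero_add hB hV hx
  have htwo : Nat.card {Q : QuadraticRefinement B // Q.IsOdd ∧ Q x = 0} = 2 := by omega
  have hexists := (Nat.card_eq_two_iff' ⟨Q, hQ, hQx⟩).1 htwo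
  refine or_iff_not_imp_left.2 fun hSQ => ?_
  exact congrArg Subtype.val (hexists.unique (y₁ := ⟨S, hS, hSx⟩) (y₂ := ⟨Q', hQ', hQ'x⟩)
    (fun h => hSQ (congrArg Subtype.val h)) fun h => hne (congrArg Subtype.val h).symm)

end Arf

end QuadraticRefinement

section SymplecticGroup

variable (l R : Type*) [Fintype l] [DecidableEq l] [CommRing R]

/-- The standard alternating form on `R ^ (2n)`, given by the matrix `J`. -/
def symplecticForm : BilinForm R (l ⊕ l → R) :=
  (J l R).toBilin'

theorem symplecticForm_apply (x y : l ⊕ l → R) :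
    symplecticForm l R x y = ∑ i, (x (.inr i) * y (.inl i) - x (.inl i) * y (.inr i)) := by
  rw [symplecticForm, toBilin'_apply', J, fromBlocks_mulVec]
  simp only [dotProduct, Fintype.sum_sum_type, Sum.elim_inl, Sum.elim_inr, zero_mulVec, neg_mulVec,
    one_mulVec, zero_add, add_zero, Pi.neg_apply, Function.comp_apply, mul_neg,
    Finset.sum_neg_distrib, Finset.sum_sub_distrib]
  exact neg_add_eq_sub _ _

theorem isAlt_symplecticForm : (symplecticForm l R).IsAlt := fun x => by
  rw [symplecticForm_apply]
  exact Finset.sum_eq_zero fun i _ => by ring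

theorem nondegenerate_symplecticForm : (symplecticForm l R).Nondegenerate :=
  (Nondegenerate.of_det_mem_nonZeroDivisors (isUnit_det_J l R).mem_nonZeroDivisors).toBilin'

variable {l R}

theorem mem_symplecticGroup_iff_symplecticForm {M : Matrix (l ⊕ l) (l ⊕ l) R} :
    M ∈ symplecticGroup l R ↔
      ∀ x y, symplecticForm l R (x ᵥ* M) (y ᵥ* M) = symplecticForm l R x y := by
  have h := toBilin'_comp (J l R) Mᵀ Mᵀ
  rw [transpose_transpose] at h
  rw [SymplecticGroup.mem_iff, ← toBilin'.injective.eq_iff, ← h, LinearMap.ext_iff₂]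
  simp only [LinearMap.BilinForm.comp_apply, toLin'_apply, mulVec_transpose]
  rfl

theorem vecMul_one_add_vecMulVec_J (a x : l ⊕ l → R) :
    x ᵥ* (1 + vecMulVec (J l R *ᵥ a) a) = x + symplecticForm l R x a • a := by
  rw [vecMul_add, vecMul_one, vecMul_vecMulVec, symplecticForm, toBilin'_apply']

/-- The transvection `x ↦ x + ω(x, a) a`, where matrices act on row vectors. -/
def symplecticTransvection (a : l ⊕ l → R) : symplecticGroup l R :=
  ⟨1 + vecMulVec (J l R *ᵥ a) a, mem_symplecticGroup_iff_symplecticForm.2 fun x y => by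
    have hB := isAlt_symplecticForm l R
    simp only [vecMul_one_add_vecMulVec_J, map_add, map_smul, LinearMap.add_apply,
      LinearMap.smul_apply, smul_eq_mul, hB.self_eq_zero a, ← hB.neg_eq y a]
    ring⟩

theorem vecMul_symplecticTransvection (a x : l ⊕ l → R) :
    x ᵥ* (symplecticTransvection a).1 = x + symplecticForm l R x a • a :=
  vecMul_one_add_vecMulVec_J a x

instance [CharP R 2] : Nonempty (QuadraticRefinement (symplecticForm l R)) :=
  ⟨{ toQuadraticMap :=
      ∑ i, QuadraticMap.linMulLin (LinearMap.proj (.inl i)) (LinearMap.proj (.inr i))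
     map_add' := fun x y => by
      simp only [_root_.sum_apply, QuadraticMap.linMulLin_apply, LinearMap.proj_apply,
        symplecticForm_apply, ← Finset.sum_add_distrib, CharTwo.sub_eq_add, Pi.add_apply]
      exact Finset.sum_congr rfl fun i _ => by ring }⟩

namespace QuadraticRefinement

/-- `Sp` acts by `(M • Q) x = Q (x M)`. -/
instance : MulAction (symplecticGroup l R) (QuadraticRefinement (symplecticForm l R)) where
  smul M Q :=
    { toQuadraticMap := Q.toQuadraticMap.comp M.1.vecMulLinear
      map_add' := fun x y => by
        change Q ((x + y) ᵥ* M.1) = Q (x ᵥ* M.1) + Q (y ᵥ* M.1) + _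
        rw [add_vecMul, Q.map_add, mem_symplecticGroup_iff_symplecticForm.1 M.2] }
  one_smul Q := DFunLike.ext _ _ fun x => congrArg Q (vecMul_one x)
  mul_smul M N Q := DFunLike.ext _ _ fun x => congrArg Q (vecMul_vecMul x M.1 N.1).symm

theorem smul_apply (M : symplecticGroup l R) (Q : QuadraticRefinement (symplecticForm l R))
    (x : l ⊕ l → R) : (M • Q) x = Q (x ᵥ* M.1) :=
  rfl

theorem symplecticTransvection_smul_apply (a : l ⊕ l → R)
    (Q : QuadraticRefinement (symplecticForm l R)) (x : l ⊕ l → R) :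
    (symplecticTransvection a • Q) x = Q x + (1 + Q a) * symplecticForm l R x a ^ 2 := by
  rw [smul_apply, vecMul_symplecticTransvection, Q.map_add_smul_self]

theorem symplecticTransvection_smul_of_eq_zero {a : l ⊕ l → ZMod 2}
    {Q : QuadraticRefinement (symplecticForm l (ZMod 2))} (ha : Q a = 0) :
    symplecticTransvection a • Q = a +ᵥ Q :=
  DFunLike.ext _ _ fun x => by
    rw [symplecticTransvection_smul_apply, vadd_apply, ha, add_zero, one_mul,
      ← (isAlt_symplecticForm l (ZMod 2)).neg_eq, neg_sq]

theorem symplecticTransvection_smul_of_eq_one {a : l ⊕ l → ZMod 2}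
    {Q : QuadraticRefinement (symplecticForm l (ZMod 2))} (ha : Q a = 1) :
    symplecticTransvection a • Q = Q :=
  DFunLike.ext _ _ fun x => by
    rw [symplecticTransvection_smul_apply, ha, CharTwo.add_self_eq_zero,
      zero_mul, add_zero]

theorem signSum_smul (M : symplecticGroup l (ZMod 2))
    (Q : QuadraticRefinement (symplecticForm l (ZMod 2))) : (M • Q).signSum = Q.signSum := by
  have hM : IsUnit M.1 := (Group.isUnit M).map (symplecticGroup l (ZMod 2)).subtype
  have hbij := Finite.injective_iff_bijective.1 (vecMul_injective_iff_isUnit.2 hM)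
  exact hbij.sum_comp fun x => signChar (Q x)

variable (l) in
/-- The odd refinements of the symplectic form over `𝔽₂`, with the action of `Sp`. -/
def oddForms : SubMulAction (symplecticGroup l (ZMod 2))
    (QuadraticRefinement (symplecticForm l (ZMod 2))) where
  carrier := {Q | Q.IsOdd}
  smul_mem' M Q hQ := (signSum_smul M Q).trans_lt hQ

theorem card_symplecticSpace : Fintype.card (l ⊕ l → ZMod 2) = (2 ^ Fintype.card l) ^ 2 := by
  rw [Fintype.card_fun, ZMod.card, Fintype.card_sum, ← pow_mul, mul_two]

theorem symplecticForm_vecMul_of_forall_smul_eq [Nontrivial l] {M : symplecticGroup l (ZMod 2)}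
    (hM : ∀ Q ∈ oddForms l, M • Q = Q) (a x : l ⊕ l → ZMod 2) :
    symplecticForm l (ZMod 2) a (x ᵥ* M.1) = symplecticForm l (ZMod 2) a x := by
  obtain rfl | ha := eq_or_ne a 0
  · rw [map_zero, LinearMap.zero_apply, LinearMap.zero_apply]
  have hg : 2 < 2 ^ Fintype.card l := lt_self_pow₀ one_lt_two Fintype.one_lt_card
  obtain ⟨Q, hQ, hQa⟩ := exists_isOdd_apply_eq_zero (nondegenerate_symplecticForm l (ZMod 2))
    card_symplecticSpace hg ha
  have hfix : (M • Q) x = Q x := by rw [hM Q hQ]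
  have hfix_vadd : (M • (a +ᵥ Q)) x = (a +ᵥ Q) x := by rw [hM _ (hQ.vadd hQa)]
  rwa [smul_apply, vadd_apply, vadd_apply, ← smul_apply, hfix, add_right_inj, ZMod.pow_card,
    ZMod.pow_card] at hfix_vadd

theorem toPermHom_oddForms_injective [Nontrivial l] :
    Function.Injective (MulAction.toPermHom (symplecticGroup l (ZMod 2)) (oddForms l)) := by
  refine (injective_iff_map_eq_one _).2 fun M hM => Subtype.ext (ext_of_single_vecMul fun i => ?_)
  have hfix : ∀ Q ∈ oddForms l, M • Q = Q := fun Q hQ =>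
    congrArg Subtype.val (show M • (⟨Q, hQ⟩ : oddForms l) = _ from DFunLike.congr_fun hM _)
  rw [Submonoid.coe_one, vecMul_one, ← sub_eq_zero]
  refine (nondegenerate_symplecticForm l (ZMod 2)).2 _ fun a => ?_
  rw [map_sub, symplecticForm_vecMul_of_forall_smul_eq hfix, sub_self]

end QuadraticRefinement

end SymplecticGroup

namespace QuadraticRefinement

theorem card_symplecticSpace_fin_two : Fintype.card (Fin 2 ⊕ Fin 2 → ZMod 2) = 4 ^ 2 :=
  card_symplecticSpace

theorem card_oddForms_fin_two : Nat.card (oddForms (Fin 2)) = 6 := by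
  have h : 2 * Nat.card (oddForms (Fin 2)) + 4 = 4 ^ 2 :=
    two_mul_card_isOdd_add (nondegenerate_symplecticForm _ _) card_symplecticSpace_fin_two
  omega

open Classical in
theorem exists_toPermHom_oddForms_eq_swap {Q Q' : oddForms (Fin 2)} (hne : Q ≠ Q') :
    ∃ M : symplecticGroup (Fin 2) (ZMod 2), MulAction.toPermHom _ _ M = Equiv.swap Q Q' := by
  have hB := nondegenerate_symplecticForm (Fin 2) (ZMod 2)
  obtain ⟨a, hQa, hQQ'⟩ := IsOdd.exists_vadd_eq hB Q.2 Q'.2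
  have ha : a ≠ 0 := by
    rintro rfl
    rw [zero_vadd] at hQQ'
    exact hne (Subtype.ext hQQ')
  have hQ'a : Q'.1 a = 0 := by
    rw [← hQQ', vadd_apply, hQa, Q.1.apply_self, zero_add, zero_pow two_ne_zero]
  refine ⟨symplecticTransvection a, Equiv.ext fun S => Subtype.ext ?_⟩
  change symplecticTransvection a • S.1 = _
  obtain rfl | hSQ := eq_or_ne S Q
  · rw [Equiv.swap_apply_left, symplecticTransvection_smul_of_eq_zero hQa, hQQ']
  obtain rfl | hSQ' := eq_or_ne S Q'
  · rw [Equiv.swap_apply_right, symplecticTransvection_smul_of_eq_zero hQ'a, ← hQQ',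
      vadd_vadd_self]
  · have hSa : S.1 a ≠ 0 := fun h =>
      (IsOdd.eq_or_eq_of_apply_eq_zero hB card_symplecticSpace_fin_two ha Q.2 Q'.2 S.2 hQa hQ'a h
        (Subtype.coe_injective.ne hne)).elim (fun h => hSQ (Subtype.ext h))
        fun h => hSQ' (Subtype.ext h)
    rw [Equiv.swap_apply_of_ne_of_ne hSQ hSQ',
      symplecticTransvection_smul_of_eq_one (Fin.eq_one_of_ne_zero _ hSa)]

theorem toPermHom_oddForms_fin_two_surjective : Function.Surjective
    (MulAction.toPermHom (symplecticGroup (Fin 2) (ZMod 2)) (oddForms (Fin 2))) := by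
  classical
  rw [← MonoidHom.range_eq_top, eq_top_iff, ← Equiv.Perm.closure_isSwap, Subgroup.closure_le]
  rintro _ ⟨Q, Q', hne, rfl⟩
  exact exists_toPermHom_oddForms_eq_swap hne

end QuadraticRefinement

/-- The symplectic group `Sp(4,𝔽₂)` is isomorphic to the symmetric group `S₆`. -/
theorem symplecticGroup_iso_perm_fin_six :
    Nonempty (Matrix.symplecticGroup (Fin 2) (ZMod 2) ≃* Equiv.Perm (Fin 6)) := by
  let toPerm :
      symplecticGroup (Fin 2) (ZMod 2) ≃* Equiv.Perm (QuadraticRefinement.oddForms (Fin 2)) :=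
    MulEquiv.ofBijective _ ⟨QuadraticRefinement.toPermHom_oddForms_injective,
      QuadraticRefinement.toPermHom_oddForms_fin_two_surjective⟩
  let equivFin : QuadraticRefinement.oddForms (Fin 2) ≃ Fin 6 :=
    Finite.equivFinOfCardEq QuadraticRefinement.card_oddForms_fin_two
  exact ⟨toPerm.trans equivFin.permCongrHom⟩
end
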